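/- arXiv:1104.3444 — 2 statements merged into one kernel-verified Lean document; each statement's English description precedes it below -/
import Mathlib

section
/- Let X be a finite set with a distinguished subset of labelled singletons determining π_X. The transfer matrix M = (m(π∨σ))_{π,σ∈Π_l(X,π_X)} is invertible if and only if Π_l(X,π_X) = Π_l(X,π_X)₀ (i.e., λ(π) ≠ 0 for every π ∈ Π_l(X,π_X)); in this case M = M₀. -/
open scoped Classical

noncomputable section

/-! ## Labelled set partitions -/

/-- A labelled set partition of a finite set `α`: a set partition of `α` (encoded as the
equivalence relation `rel` whose classes are the blocks) in which each block either carries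
the label `l` or not (a point `x` lies in `lab` iff the block of `x` is labelled). -/
@[ext]
structure LPart (α : Type*) where
  rel : Setoid α
  lab : Set α
  lab_mem : ∀ ⦃x y : α⦄, rel x y → (x ∈ lab ↔ y ∈ lab)

namespace LPart

variable {α : Type*}

/-- `σ ≤ π` iff every block of `σ` (together with its label) is contained in a block of `π`. -/
instance : PartialOrder (LPart α) where
  le σ π := σ.rel ≤ π.rel ∧ σ.lab ⊆ π.lab
  le_refl σ := ⟨le_rfl, subset_rfl⟩
  le_trans _ _ _ h h' := ⟨h.1.trans h'.1, h.2.trans h'.2⟩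
  le_antisymm σ π h h' := LPart.ext (le_antisymm h.1 h'.1) (le_antisymm h.2 h'.2)

/-- The join (smallest common coarsening) of two labelled set partitions: the join of the
underlying partitions, a block being labelled iff it contains a labelled block of one of the
two partitions. -/
def sup (σ π : LPart α) : LPart α where
  rel := σ.rel ⊔ π.rel
  lab := {x | ∃ y, (σ.rel ⊔ π.rel) x y ∧ (y ∈ σ.lab ∨ y ∈ π.lab)}
  lab_mem := by
    intro x y h
    constructor
    · rintro ⟨z, hz, hl⟩
      exact ⟨z, (σ.rel ⊔ π.rel).iseqv.trans ((σ.rel ⊔ π.rel).iseqv.symm h) hz, hl⟩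
    · rintro ⟨z, hz, hl⟩
      exact ⟨z, (σ.rel ⊔ π.rel).iseqv.trans h hz, hl⟩

instance _root_.Setoid.finite [Finite α] : Finite (Setoid α) :=
  Finite.of_injective (fun s : Setoid α => ⇑s) fun _ _ h => Setoid.eq_iff_rel_eq.2 h

instance [Finite α] : Finite (LPart α) :=
  Finite.of_injective (fun π : LPart α => (π.rel, π.lab))
    (fun a b h => by
      cases a; cases b
      simpa [LPart.mk.injEq] using h)

instance fintype [Finite α] : Fintype (LPart α) := Fintype.ofFinite _

/-- `π` has exactly one labelled block. -/
def OneLab (π : LPart α) : Prop :=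
  π.lab.Nonempty ∧ ∀ x ∈ π.lab, ∀ y ∈ π.lab, π.rel x y

/-- The indicator `m(π)` that `π` has exactly one labelled block. -/
def m (π : LPart α) : ℝ := if π.OneLab then 1 else 0

/-- The labelled set partition `π_X` into singleton blocks, the singleton `{x}` being
labelled iff `x ∈ K`. -/
def piX (K : Set α) : LPart α :=
  ⟨⊥, K, fun x y h => by
    have : x = y := by
      have := Setoid.bot_def (α := α)
      exact congrFun (congrFun this x) y ▸ h
    rw [this]⟩

end LPart

/-- The Möbius function of a finite poset (the unique `μ` with `μ ⋆ ζ = δ`),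
evaluated at a pair of elements. -/
def mobius {P : Type*} [Fintype P] [PartialOrder P] (x y : P) : ℝ :=
  letI : LocallyFiniteOrder P := Fintype.toLocallyFiniteOrder
  IncidenceAlgebra.mu ℝ x y

/-- The state set `Π_l(X, π_X)`: all labelled set partitions `π ≥ π_X` having at least one
labelled block. -/
abbrev LStates (α : Type*) (K : Set α) : Type _ :=
  {π : LPart α // LPart.piX K ≤ π ∧ π.lab.Nonempty}

noncomputable instance {α : Type*} [Finite α] (K : Set α) : Fintype (LStates α K) :=
  Fintype.ofFinite _

/-- `λ(π) = ∑_{σ ∈ Π_l(X,π_X), σ ≥ π} μ_{Π_l(X)}(π, σ) m(σ)`. -/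
def lamda {α : Type*} [Finite α] (K : Set α) (π : LPart α) : ℝ :=
  letI : Fintype (LPart α) := LPart.fintype
  ∑ σ : LStates α K, if π ≤ σ.1 then mobius π σ.1 * LPart.m σ.1 else 0

/-- `Π_l(X,π_X)₀`: the states `π` with `λ(π) ≠ 0`. -/
abbrev LStates0 (α : Type*) [Finite α] (K : Set α) : Type _ :=
  {π : LStates α K // lamda K π.1 ≠ 0}

/-- Restriction of a matrix indexed by `Π_l(X,π_X)` to rows and columns in `Π_l(X,π_X)₀`. -/
def restrict0 {α : Type*} [Finite α] {K : Set α}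
    (A : Matrix (LStates α K) (LStates α K) ℝ) : Matrix (LStates0 α K) (LStates0 α K) ℝ :=
  A.submatrix Subtype.val Subtype.val

/-!
The argument is Lindström's and Wilf's for join matrices. On a finite join-semilattice let `Z` be
the matrix of the zeta function and let `g` be the Möbius transform of `f`, so that
`f x = ∑ z ≥ x, g z` by Möbius inversion. As `x ⊔ y ≤ z` means `x ≤ z` and `y ≤ z`, the matrix
`(f (x ⊔ y))` equals `Z * diagonal g * Zᵀ`, and `Z` is invertible, so only the entries of `g`
matter. The states are closed upwards in `Π_l(X)`. Hence they form a join-semilattice whose Möbius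
function is that of `Π_l(X)`, and the Möbius transform of `m` is `λ`.
-/

section IncidenceToMatrix

open IncidenceAlgebra Matrix

variable {P R : Type*} [Fintype P] [Preorder P] [LocallyFiniteOrder P] [DecidableEq P] [Semiring R]

/-- The matrix representation of the incidence algebra of a finite preorder: convolution over
intervals becomes matrix multiplication. -/
def incidenceToMatrix : IncidenceAlgebra R P →+* Matrix P P R where
  toFun f := of f
  map_one' := by
    ext x y
    simp [Matrix.one_apply]
  map_mul' f g := by
    ext x y
    refine Finset.sum_subset (Finset.subset_univ _) fun z _ hz => ?_
    rw [Finset.mem_Icc, not_and_or] at hz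
    rcases hz with hxz | hzy
    · rw [apply_eq_zero_of_not_le hxz, zero_mul]
    · rw [apply_eq_zero_of_not_le hzy, mul_zero]
  map_zero' := rfl
  map_add' _ _ := rfl

@[simp]
theorem incidenceToMatrix_apply (f : IncidenceAlgebra R P) (x y : P) :
    incidenceToMatrix f x y = f x y :=
  rfl

end IncidenceToMatrix

section MobiusTransform

open IncidenceAlgebra Matrix

variable {P R : Type*} [Fintype P] [PartialOrder P] [LocallyFiniteOrder P] [DecidableEq P] [Ring R]

theorem isUnit_incidenceToMatrix_zeta [DecidableLE P] :
    IsUnit (incidenceToMatrix (zeta R : IncidenceAlgebra R P)) :=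
  (isUnit_iff_exists.2 ⟨mu R, zeta_mul_mu, mu_mul_zeta R P⟩).map incidenceToMatrix

/-- The Möbius transform `x ↦ ∑ y ≥ x, μ(x, y) f(y)` of a function on a finite poset, which
inverts summation over upper sets. The sum may run over all `y` because `μ(x, y) = 0` unless
`x ≤ y`. -/
def mobiusTransform (f : P → R) : P → R :=
  fun x => ∑ y, mu R x y * f y

theorem zeta_mulVec_mobiusTransform [DecidableLE P] (f : P → R) :
    incidenceToMatrix (zeta R) *ᵥ mobiusTransform f = f := by
  have hmu : mobiusTransform f = incidenceToMatrix (mu R) *ᵥ f := rfl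
  rw [hmu, mulVec_mulVec, ← map_mul, zeta_mul_mu, map_one, one_mulVec]

end MobiusTransform

section JoinMatrix

open IncidenceAlgebra Matrix

variable {P R : Type*}

theorem zeta_sup [SemilatticeSup P] [DecidableLE P] [MulZeroOneClass R] (x y z : P) :
    zeta R (x ⊔ y) z = zeta R x z * zeta R y z := by
  simp only [zeta_apply, sup_le_iff, ite_zero_mul_ite_zero, mul_one]

/-- The join matrix `(f (x ⊔ y))` of a function on a join-semilattice. -/
def joinMatrix [Max P] (f : P → R) : Matrix P P R :=
  of fun x y => f (x ⊔ y)

variable [Fintype P] [SemilatticeSup P] [LocallyFiniteOrder P] [DecidableEq P]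

theorem joinMatrix_zeta_mulVec [DecidableLE P] [CommSemiring R] (g : P → R) :
    joinMatrix (incidenceToMatrix (zeta R) *ᵥ g) =
      incidenceToMatrix (zeta R) * diagonal g * (incidenceToMatrix (zeta R))ᵀ := by
  ext x y
  rw [Matrix.mul_apply]
  refine Finset.sum_congr rfl fun z _ => ?_
  rw [mul_diagonal, transpose_apply]
  simp only [incidenceToMatrix_apply]
  rw [zeta_sup, mul_right_comm]

theorem joinMatrix_eq_zeta_mul_diagonal_mul [DecidableLE P] [CommRing R] (f : P → R) :
    joinMatrix f = incidenceToMatrix (zeta R) * diagonal (mobiusTransform f) *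
      (incidenceToMatrix (zeta R))ᵀ := by
  rw [← joinMatrix_zeta_mulVec, zeta_mulVec_mobiusTransform]

theorem isUnit_joinMatrix_iff [CommRing R] (f : P → R) :
    IsUnit (joinMatrix f) ↔ ∀ x, IsUnit (mobiusTransform f x) := by
  have hZ : IsUnit (incidenceToMatrix (zeta R : IncidenceAlgebra R P)) :=
    isUnit_incidenceToMatrix_zeta
  rw [joinMatrix_eq_zeta_mul_diagonal_mul, IsUnit.mul_iff, IsUnit.mul_iff, isUnit_transpose,
    isUnit_diagonal, Pi.isUnit_iff]
  simp only [hZ, true_and, and_true]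

end JoinMatrix

section Mobius

open IncidenceAlgebra

variable {P : Type*}

theorem mu_subtype {R : Type*} [AddCommGroup R] [One R] [Preorder P] [LocallyFiniteOrder P]
    [DecidableEq P] {p : P → Prop} [DecidablePred p]
    (hp : ∀ ⦃a b x⦄, a ≤ x → x ≤ b → p a → p b → p x) (x y : Subtype p) :
    mu R x y = mu R (x : P) (y : P) := by
  have sum_Ico : ∑ z ∈ Finset.Ico x y, mu R x z = ∑ z ∈ Finset.Ico (x : P) y, mu R (x : P) z := by
    rw [← Finset.map_subtype_embedding_Ico p x y hp, Finset.sum_map]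
    refine Finset.sum_congr rfl fun z hz => ?_
    have : (Finset.Icc x z).card < (Finset.Icc x y).card := by
      obtain ⟨hxz, hzy⟩ := Finset.mem_Ico.1 hz
      exact Finset.card_lt_card (Finset.Icc_ssubset_Icc_right (hxz.trans hzy.le) le_rfl hzy)
    exact mu_subtype hp x z
  rw [mu_apply, mu_apply, sum_Ico]
  simp only [Subtype.ext_iff]
termination_by (Finset.Icc x y).card

theorem mobius_eq_mu [Fintype P] [PartialOrder P] [LocallyFiniteOrder P] [DecidableEq P]
    (x y : P) : mobius x y = mu ℝ x y := by
  unfold mobius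
  congr!
  exact Subsingleton.elim _ _

end Mobius

namespace LPart

variable {α : Type*}

instance instSemilatticeSup : SemilatticeSup (LPart α) where
  sup := sup
  le_sup_left σ π := ⟨le_sup_left, fun x hx => ⟨x, Setoid.refl' _ x, Or.inl hx⟩⟩
  le_sup_right σ π := ⟨le_sup_right, fun x hx => ⟨x, Setoid.refl' _ x, Or.inr hx⟩⟩
  sup_le σ π τ hσ hπ := by
    have hrel : σ.rel ⊔ π.rel ≤ τ.rel := sup_le hσ.1 hπ.1
    refine ⟨hrel, ?_⟩
    rintro x ⟨y, hxy, hy⟩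
    exact (τ.lab_mem (hrel hxy)).2 (hy.elim (@hσ.2 y) (@hπ.2 y))

instance instLocallyFiniteOrder [Finite α] : LocallyFiniteOrder (LPart α) :=
  Fintype.toLocallyFiniteOrder

end LPart

namespace LStates

variable {α : Type*} {K : Set α}

theorem isUpperSet : IsUpperSet {π : LPart α | LPart.piX K ≤ π ∧ π.lab.Nonempty} :=
  fun _ _ hle h => ⟨h.1.trans hle, h.2.mono hle.2⟩

instance instSemilatticeSup : SemilatticeSup (LStates α K) :=
  Subtype.semilatticeSup fun _ _ hπ _ => isUpperSet le_sup_left hπ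

theorem mobius_coe [Finite α] (π σ : LStates α K) :
    mobius π.1 σ.1 = IncidenceAlgebra.mu ℝ π σ := by
  rw [mobius_eq_mu, mu_subtype fun _ _ _ hle _ hπ _ => isUpperSet hle hπ]

theorem lamda_eq_mobiusTransform [Finite α] (π : LStates α K) :
    lamda K π.1 = mobiusTransform (fun σ : LStates α K => LPart.m σ.1) π := by
  refine Finset.sum_congr rfl fun σ _ => ?_
  rw [mobius_coe]
  split_ifs with hle
  · rfl
  · rw [IncidenceAlgebra.apply_eq_zero_of_not_le (Subtype.coe_le_coe.not.1 hle), zero_mul]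

end LStates

/-- The transfer matrix `M = (m(π ∨ σ))` is invertible iff `Π_l(X,π_X) = Π_l(X,π_X)₀`,
i.e. iff `λ(π) ≠ 0` for every `π ∈ Π_l(X,π_X)`; and in that case `M` coincides with its
restriction `M₀`. -/
theorem transfer_matrix_invertible_iff {α : Type*} [Fintype α] (K : Set α)
    (M : Matrix (LStates α K) (LStates α K) ℝ)
    (hM : ∀ π σ : LStates α K, M π σ = LPart.m (π.1.sup σ.1)) :
    (IsUnit M ↔ ∀ π : LStates α K, lamda K π.1 ≠ 0) ∧
      ∀ h : ∀ π : LStates α K, lamda K π.1 ≠ 0,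
        ∀ π σ : LStates α K, M π σ = restrict0 M ⟨π, h π⟩ ⟨σ, h σ⟩ := by
  refine ⟨?_, fun _ _ _ => rfl⟩
  have hjoin : M = joinMatrix fun σ : LStates α K => LPart.m σ.1 := Matrix.ext hM
  rw [hjoin, isUnit_joinMatrix_iff]
  simp only [LStates.lamda_eq_mobiusTransform, isUnit_iff_ne_zero]

end
end

section
/- Let X be an n-element set and suppose exactly k of the singleton blocks of π_X are labelled. Then the cardinality P₀(n,k) of Π_l(X,π_X)₀ satisfies: P₀(n,0) = ∑_{j=0}^{n−1} C(n,j) B(n−j) = B(n+1) − 1, and for k ≥ 1, P₀(n,k) = ∑_{j=0}^{n−k} C(n−k,j) B(n−j), where B(m) is the m-th Bell number. -/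
open scoped Classical

noncomputable section

/-- The `m`-th Bell number: the number of set partitions (equivalence relations) of an
`m`-element set. -/
def bell (m : ℕ) : ℕ := Nat.card (Setoid (Fin m))

/-!
The *kernel* of a map `f : X → Option β` is the labelled partition of `X` whose labelled blocks are
the nonempty fibres over `β`, the fibre of `none` being its unique unlabelled block, if any. Every
labelled partition with at most one unlabelled block is such a kernel. Counting in two ways the maps
`f` into a set with `x` elements plus `none` whose kernel lies above a labelled partition `π` with
`a(π)` labelled and `b(π)` unlabelled blocks gives the polynomial identity

  `∑ (x)_{a(σ)} = x ^ a(π) * (x + 1) ^ b(π)`,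

the sum being over the `σ ≥ π` with at most one unlabelled block. If `π` has a labelled block,
comparing the coefficients of `x` yields `∑ c(a(σ)) = m(π)`, where `c(a) = (-1) ^ (a-1) * (a-1)!` is
the coefficient of `x` in the falling factorial `(x)_a`. By Möbius inversion `λ(π) = c(a(π)) ≠ 0` if
`π` has at most one unlabelled block, and `λ(π) = 0` otherwise.

The partitions with at most one unlabelled block are counted by the union `V` of their labelled
blocks, which are an arbitrary partition of `V`. Adjoining a new point to the unlabelled block
identifies them with the partitions of an `(n + 1)`-element set.
-/

namespace LPart

section Kernel

variable {α β : Type*}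

/-- The condition that at most one block of `σ` carries no label. -/
def AtMostOneUnlabelled (σ : LPart α) : Prop :=
  ∀ x y, x ∉ σ.lab → y ∉ σ.lab → σ.rel x y

/-- The set of labelled blocks of `σ`, as a subset of the quotient by `σ.rel`. -/
def labBlocks (σ : LPart α) : Set (Quotient σ.rel) :=
  Quotient.mk σ.rel '' σ.lab

lemma mk_mem_labBlocks {σ : LPart α} {x : α} : Quotient.mk σ.rel x ∈ σ.labBlocks ↔ x ∈ σ.lab := by
  refine ⟨?_, Set.mem_image_of_mem _⟩
  rintro ⟨y, hy, hyx⟩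
  exact (σ.lab_mem (Quotient.exact hyx)).1 hy

lemma labBlocks_nonempty_iff {σ : LPart α} : σ.labBlocks.Nonempty ↔ σ.lab.Nonempty :=
  Set.image_nonempty

lemma ncard_labBlocks_pos [Finite α] {σ : LPart α} : 0 < σ.labBlocks.ncard ↔ σ.lab.Nonempty := by
  rw [Set.ncard_pos, labBlocks_nonempty_iff]

lemma oneLab_iff_ncard_labBlocks_eq_one {σ : LPart α} : σ.OneLab ↔ σ.labBlocks.ncard = 1 := by
  rw [Set.ncard_eq_one, Set.exists_eq_singleton_iff_nonempty_subsingleton, labBlocks_nonempty_iff,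
    OneLab]
  refine and_congr_right fun _ => ⟨?_, fun h x hx y hy => ?_⟩
  · rintro h _ ⟨x, hx, rfl⟩ _ ⟨y, hy, rfl⟩
    exact Quotient.sound (h x hx y hy)
  · exact Quotient.exact (h (mk_mem_labBlocks.2 hx) (mk_mem_labBlocks.2 hy))

/-- The kernel of `f : α → Option β`: the partition of `α` into the nonempty fibres of `f`, where
the fibres over elements of `β` are labelled and the fibre over `none` is not. -/
def kernel (f : α → Option β) : LPart α where
  rel := Setoid.ker f
  lab := {x | f x ≠ none}
  lab_mem _ _ h := by simp [Setoid.ker_def.1 h]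

lemma kernel_rel {f : α → Option β} {x y : α} : (kernel f).rel x y ↔ f x = f y := Iff.rfl

lemma mem_kernel_lab {f : α → Option β} {x : α} : x ∈ (kernel f).lab ↔ f x ≠ none := Iff.rfl

lemma atMostOneUnlabelled_kernel (f : α → Option β) : (kernel f).AtMostOneUnlabelled :=
  fun _ _ hx hy => (not_not.1 hx).trans (not_not.1 hy).symm

lemma AtMostOneUnlabelled.ext {σ τ : LPart α} (hσ : σ.AtMostOneUnlabelled)
    (hτ : τ.AtMostOneUnlabelled) (hlab : σ.lab = τ.lab)
    (hrel : ∀ x ∈ σ.lab, ∀ y ∈ σ.lab, (σ.rel x y ↔ τ.rel x y)) : σ = τ := by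
  refine LPart.ext (Setoid.ext fun x y => ?_) hlab
  by_cases hx : x ∈ σ.lab <;> by_cases hy : y ∈ σ.lab
  · exact hrel x hx y hy
  · exact iff_of_false (fun h => hy ((σ.lab_mem h).1 hx))
      fun h => hy (hlab ▸ (τ.lab_mem h).1 (hlab ▸ hx))
  · exact iff_of_false (fun h => hx ((σ.lab_mem h).2 hy))
      fun h => hx (hlab ▸ (τ.lab_mem h).2 (hlab ▸ hy))
  · exact iff_of_true (hσ x y hx hy) (hτ x y (hlab ▸ hx) (hlab ▸ hy))

/-- The map sending each labelled point to its block and each unlabelled point to `none`: the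
universal map with kernel `σ` when `σ` has at most one unlabelled block. -/
def blockMap (σ : LPart α) (x : α) : Option σ.labBlocks :=
  if h : x ∈ σ.lab then some ⟨Quotient.mk σ.rel x, mk_mem_labBlocks.2 h⟩ else none

lemma blockMap_of_mem {σ : LPart α} {x : α} (h : x ∈ σ.lab) :
    σ.blockMap x = some ⟨Quotient.mk σ.rel x, mk_mem_labBlocks.2 h⟩ :=
  dif_pos h

lemma blockMap_of_notMem {σ : LPart α} {x : α} (h : x ∉ σ.lab) : σ.blockMap x = none :=
  dif_neg h

lemma kernel_blockMap {σ : LPart α} (hσ : σ.AtMostOneUnlabelled) : kernel σ.blockMap = σ := by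
  have hlab : (kernel σ.blockMap).lab = σ.lab := by
    ext x
    by_cases hx : x ∈ σ.lab <;> simp [mem_kernel_lab, blockMap, hx]
  refine (atMostOneUnlabelled_kernel _).ext hσ hlab fun x hx y hy => ?_
  rw [hlab] at hx hy
  rw [kernel_rel, blockMap_of_mem hx, blockMap_of_mem hy, Option.some_inj, Subtype.mk_eq_mk]
  exact Quotient.eq

lemma kernel_map_comp {γ : Type*} {e : β → γ} (he : e.Injective) (f : α → Option β) :
    kernel (Option.map e ∘ f) = kernel f := by
  refine LPart.ext (Setoid.ext fun x y => ?_) (Set.ext fun x => ?_)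
  · exact (Option.map_injective he).eq_iff
  · simp [mem_kernel_lab]

lemma exists_embedding_map_comp_blockMap_eq (f : α → Option β) :
    ∃ e : (kernel f).labBlocks ↪ β, Option.map e ∘ (kernel f).blockMap = f := by
  have value (q : (kernel f).labBlocks) :
      ∃ b, ∀ x, Quotient.mk (kernel f).rel x = q.1 → f x = some b := by
    obtain ⟨_, x, hx, rfl⟩ := q
    obtain ⟨b, hb⟩ := Option.ne_none_iff_exists'.1 hx
    exact ⟨b, fun y hy => (Quotient.exact hy : f y = f x).trans hb⟩
  choose e he using value
  have e_injective : e.Injective := by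
    rintro ⟨q, hq⟩ ⟨q', hq'⟩ h
    obtain ⟨x, rfl⟩ := q.exists_rep
    obtain ⟨y, rfl⟩ := q'.exists_rep
    refine Subtype.ext (Quotient.sound (?_ : f x = f y))
    rw [he ⟨_, hq⟩ x rfl, he ⟨_, hq'⟩ y rfl, h]
  refine ⟨⟨e, e_injective⟩, funext fun x => ?_⟩
  by_cases hx : x ∈ (kernel f).lab
  · simp [blockMap_of_mem hx, he ⟨_, mk_mem_labBlocks.2 hx⟩ x rfl]
  · simpa [blockMap_of_notMem hx] using (not_not.1 hx).symm

end Kernel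

section Counting

variable {α β : Type*}

lemma card_pi_le_kernel [Finite α] [Finite β] (π : LPart α) :
    Nat.card {f : α → Option β // π ≤ kernel f} =
      Nat.card β ^ π.labBlocks.ncard * (Nat.card β + 1) ^ π.labBlocksᶜ.ncard := by
  have := Fintype.ofFinite (Quotient π.rel)
  have descend : {f : α → Option β // π ≤ kernel f} ≃
      {g : Quotient π.rel → Option β // ∀ q, q ∈ π.labBlocks → g q ≠ none} :=
    (Equiv.subtypeSubtypeEquivSubtypeInter (fun f : α → Option β => π.rel ≤ Setoid.ker f)
      fun f => π.lab ⊆ (kernel f).lab).symm.trans <|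
    (Setoid.liftEquiv π.rel).subtypeEquiv fun _ =>
      ⟨fun h _ ⟨_, hx, hxq⟩ => hxq ▸ h hx, fun h _ hx => h _ ⟨_, hx, rfl⟩⟩
  have card_values (q : Quotient π.rel) : Nat.card {o : Option β // q ∈ π.labBlocks → o ≠ none} =
      if q ∈ π.labBlocks then Nat.card β else Nat.card β + 1 := by
    split_ifs with hq
    · refine Nat.card_congr (.trans (Equiv.subtypeEquivRight fun o => ?_)
        (Equiv.optionIsSomeEquiv β))
      simp [hq, Option.isSome_iff_ne_none]
    · simp [hq, Finite.card_option]
  rw [Nat.card_congr (descend.trans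
    (Equiv.subtypePiEquivPi (p := fun q o => q ∈ π.labBlocks → o ≠ none))), Nat.card_pi]
  simp only [card_values, Finset.prod_ite, Finset.prod_const, Set.ncard_eq_toFinset_card',
    Set.toFinset_compl]
  congr 2 <;> congr 1 <;> ext q <;> simp

lemma card_pi_kernel_eq [Finite α] [Finite β] {σ : LPart α} (hσ : σ.AtMostOneUnlabelled) :
    Nat.card {f : α → Option β // kernel f = σ} =
      (Nat.card β).descFactorial σ.labBlocks.ncard := by
  have := Fintype.ofFinite β
  have := Fintype.ofFinite σ.labBlocks
  let ofEmbedding (e : σ.labBlocks ↪ β) : {f : α → Option β // kernel f = σ} :=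
    ⟨Option.map e ∘ σ.blockMap, (kernel_map_comp e.injective _).trans (kernel_blockMap hσ)⟩
  have ofEmbedding_injective : ofEmbedding.Injective := by
    refine fun e e' h => DFunLike.ext _ _ ?_
    rintro ⟨_, x, hx, rfl⟩
    simpa [ofEmbedding, blockMap_of_mem hx] using congrFun (congrArg Subtype.val h) x
  have ofEmbedding_surjective : ofEmbedding.Surjective := by
    rintro ⟨f, rfl⟩
    obtain ⟨e, he⟩ := exists_embedding_map_comp_blockMap_eq f
    exact ⟨e, Subtype.ext he⟩
  rw [← Nat.card_congr
    (Equiv.ofBijective ofEmbedding ⟨ofEmbedding_injective, ofEmbedding_surjective⟩),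
    Nat.card_eq_fintype_card, Fintype.card_embedding_eq, Nat.card_eq_fintype_card,
    ← Nat.card_coe_set_eq, Nat.card_eq_fintype_card]

lemma sum_descFactorial_ncard_labBlocks [Finite α] [Finite β] (π : LPart α) :
    ∑ σ with σ.AtMostOneUnlabelled ∧ π ≤ σ, (Nat.card β).descFactorial σ.labBlocks.ncard =
      Nat.card β ^ π.labBlocks.ncard * (Nat.card β + 1) ^ π.labBlocksᶜ.ncard := by
  have := Fintype.ofFinite α
  have := Fintype.ofFinite β
  rw [← card_pi_le_kernel, Nat.card_eq_fintype_card (α := {_f // _}), Fintype.card_subtype,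
    Finset.card_eq_sum_card_fiberwise (f := kernel)
      (t := Finset.univ.filter fun σ => σ.AtMostOneUnlabelled ∧ π ≤ σ)
      fun f hf => by simpa [atMostOneUnlabelled_kernel] using hf]
  refine Finset.sum_congr rfl fun σ hσ => ?_
  obtain ⟨hσ, hπσ⟩ := (Finset.mem_filter.1 hσ).2
  rw [← card_pi_kernel_eq hσ, Nat.card_eq_fintype_card, Fintype.card_subtype, Finset.filter_filter]
  congr 1
  ext f
  simp only [Finset.mem_filter, Finset.mem_univ, true_and]
  exact ⟨fun h => ⟨h ▸ hπσ, h⟩, And.right⟩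

open Polynomial in
lemma sum_descPochhammer_ncard_labBlocks [Finite α] (R : Type*) [CommRing R] [IsDomain R]
    [CharZero R] (π : LPart α) :
    ∑ σ with σ.AtMostOneUnlabelled ∧ π ≤ σ, descPochhammer R σ.labBlocks.ncard =
      X ^ π.labBlocks.ncard * (X + 1) ^ π.labBlocksᶜ.ncard := by
  refine eq_of_infinite_eval_eq _ _ <|
    (Set.infinite_range_of_injective (Nat.cast_injective (R := R))).mono ?_
  rintro _ ⟨x, rfl⟩
  have := congrArg (Nat.cast (R := R)) (sum_descFactorial_ncard_labBlocks (β := Fin x) π)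
  simpa [eval_finsetSum, descPochhammer_eval_eq_descFactorial] using this

lemma sum_coeff_one_descPochhammer_eq_m [Finite α] {π : LPart α} (hπ : π.lab.Nonempty) :
    ∑ σ with σ.AtMostOneUnlabelled ∧ π ≤ σ, (descPochhammer ℝ σ.labBlocks.ncard).coeff 1 =
      π.m := by
  obtain ⟨a, ha⟩ := Nat.exists_eq_succ_of_ne_zero (ncard_labBlocks_pos.2 hπ).ne'
  rw [← Polynomial.finsetSum_coeff, sum_descPochhammer_ncard_labBlocks, m,
    oneLab_iff_ncard_labBlocks_eq_one, ha, pow_succ', mul_assoc, Polynomial.coeff_X_mul,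
    Polynomial.coeff_zero_eq_eval_zero]
  rcases a with _ | a <;> simp

end Counting

end LPart

lemma coeff_one_descPochhammer_succ (R : Type*) [CommRing R] (n : ℕ) :
    (descPochhammer R (n + 1)).coeff 1 = (-1) ^ n * (n.factorial : R) := by
  have h := ascPochhammer_eval_neg_eq_descPochhammer R (-1) n
  rw [neg_neg, ascPochhammer_eval_one] at h
  rw [h, descPochhammer_succ_left, Polynomial.coeff_X_mul, Polynomial.coeff_zero_eq_eval_zero,
    ← mul_assoc, ← mul_pow]
  simp

lemma sum_mobius_mul_eq_of_forall_ge {P : Type*} [Fintype P] [PartialOrder P] {f g : P → ℝ} {x : P}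
    (h : ∀ y, x ≤ y → g y = ∑ z with y ≤ z, f z) :
    ∑ y with x ≤ y, mobius x y * g y = f x := by
  let : LocallyFiniteOrder P := Fintype.toLocallyFiniteOrder
  calc ∑ y with x ≤ y, mobius x y * g y
      = ∑ y with x ≤ y, ∑ z with y ≤ z, mobius x y * f z :=
        Finset.sum_congr rfl fun y hy => by rw [h y (Finset.mem_filter.1 hy).2, Finset.mul_sum]
    _ = ∑ z, ∑ y ∈ Finset.Icc x z, mobius x y * f z :=
        Finset.sum_comm' fun y z => by simp
    _ = ∑ z, if x = z then f z else 0 := by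
        simp only [← Finset.sum_mul, mobius, IncidenceAlgebra.sum_Icc_mu_right, ite_mul, one_mul,
          zero_mul]
    _ = f x := Fintype.sum_ite_eq x f

section Lamda

variable {α : Type*} [Finite α] {K : Set α}

lemma lamda_eq_sum_mobius (π : LStates α K) :
    lamda K π.1 = ∑ σ with π.1 ≤ σ, mobius π.1 σ * σ.m := by
  rw [lamda, ← Finset.sum_filter]
  refine Finset.sum_bij (fun σ _ => σ.1) (fun σ hσ => by simpa using hσ)
    (fun _ _ _ _ h => Subtype.ext h) (fun σ hσ => ?_) fun _ _ => rfl
  have hπσ : π.1 ≤ σ := by simpa using hσ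
  exact ⟨⟨σ, π.2.1.trans hπσ, π.2.2.mono hπσ.2⟩,
    Finset.mem_filter.2 ⟨Finset.mem_univ _, hπσ⟩, rfl⟩

lemma lamda_eq_coeff_one_descPochhammer (π : LStates α K) :
    lamda K π.1 = if π.1.AtMostOneUnlabelled then
      (descPochhammer ℝ π.1.labBlocks.ncard).coeff 1 else 0 := by
  rw [lamda_eq_sum_mobius]
  refine sum_mobius_mul_eq_of_forall_ge (f := fun σ : LPart α => if σ.AtMostOneUnlabelled then
    (descPochhammer ℝ σ.labBlocks.ncard).coeff 1 else 0) fun σ hπσ => ?_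
  rw [← LPart.sum_coeff_one_descPochhammer_eq_m (π.2.2.mono hπσ.2), ← Finset.sum_filter,
    Finset.filter_filter]
  simp only [and_comm]

lemma lamda_ne_zero_iff (π : LStates α K) : lamda K π.1 ≠ 0 ↔ π.1.AtMostOneUnlabelled := by
  obtain ⟨a, ha⟩ := Nat.exists_eq_succ_of_ne_zero (LPart.ncard_labBlocks_pos.2 π.2.2).ne'
  rw [lamda_eq_coeff_one_descPochhammer, ha, coeff_one_descPochhammer_succ]
  simp [Nat.factorial_ne_zero]

end Lamda

lemma sum_superset_apply_ncard {α M : Type*} [Fintype α] [AddCommMonoid M] (K : Set α) (f : ℕ → M) :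
    ∑ V with K ⊆ V, f V.ncard =
      ∑ j ∈ Finset.range (Nat.card α - K.ncard + 1),
        (Nat.card α - K.ncard).choose j • f (Nat.card α - j) := by
  have card_compl : Kᶜ.toFinset.card = Nat.card α - K.ncard := by
    rw [← Set.ncard_eq_toFinset_card', Set.ncard_compl]
  rw [← card_compl, ← Finset.sum_powerset_apply_card fun j => f (Nat.card α - j)]
  refine Finset.sum_bij' (fun V _ => Vᶜ.toFinset) (fun U _ => (U : Set α)ᶜ) ?_ ?_ ?_ ?_ ?_
  · simp
  · intro U hU
    refine Finset.mem_filter.2 ⟨Finset.mem_univ _, Set.subset_compl_comm.1 ?_⟩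
    simpa using Finset.coe_subset.2 (Finset.mem_powerset.1 hU)
  · simp
  · simp
  · intro V _
    rw [← Set.ncard_eq_toFinset_card', Set.ncard_compl, Nat.sub_sub_self (Set.ncard_le_card V)]

lemma card_setoid_eq_bell (β : Type*) [Finite β] : Nat.card (Setoid β) = bell (Nat.card β) := by
  let e := Finite.equivFin β
  refine Nat.card_congr ⟨Setoid.comap e.symm, Setoid.comap e, fun s => ?_, fun s => ?_⟩ <;>
    ext <;> simp [Setoid.comap_rel]

lemma bell_zero : bell 0 = 1 :=
  Nat.card_eq_one_iff_unique.2 ⟨⟨fun _ _ => Setoid.ext fun x => x.elim0⟩, ⟨⊤⟩⟩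

namespace LPart

variable {α : Type*}

/-- The labelled partition whose labelled blocks are the blocks of the partition `t` of `V`, the
complement of `V` being the only unlabelled block, if it is nonempty. -/
def ofSetoid {V : Set α} (t : Setoid V) : LPart α :=
  kernel fun x => if h : x ∈ V then some (Quotient.mk t ⟨x, h⟩) else none

lemma ofSetoid_lab {V : Set α} (t : Setoid V) : (ofSetoid t).lab = V := by
  ext x
  by_cases hx : x ∈ V <;> simp [ofSetoid, mem_kernel_lab, hx]

lemma ofSetoid_rel {V : Set α} (t : Setoid V) (x y : V) : (ofSetoid t).rel x y ↔ t x y := by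
  rw [ofSetoid, kernel_rel, dif_pos x.2, dif_pos y.2, Option.some_inj]
  exact Quotient.eq

lemma atMostOneUnlabelled_ofSetoid {V : Set α} (t : Setoid V) :
    (ofSetoid t).AtMostOneUnlabelled :=
  atMostOneUnlabelled_kernel _

lemma ofSetoid_bijective : Function.Bijective fun q : Σ V : Set α, Setoid V =>
    (⟨ofSetoid q.2, atMostOneUnlabelled_ofSetoid q.2⟩ :
      {σ : LPart α // σ.AtMostOneUnlabelled}) := by
  refine ⟨?_, fun ⟨σ, hσ⟩ => ?_⟩
  · rintro ⟨V, t⟩ ⟨W, u⟩ h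
    have h : ofSetoid t = ofSetoid u := congrArg Subtype.val h
    obtain rfl : V = W := by rw [← ofSetoid_lab t, h, ofSetoid_lab]
    refine Sigma.ext rfl (heq_of_eq (Setoid.ext fun x y => ?_))
    rw [← ofSetoid_rel, h, ofSetoid_rel]
  · refine ⟨⟨σ.lab, Setoid.comap Subtype.val σ.rel⟩, Subtype.ext <|
      (atMostOneUnlabelled_ofSetoid _).ext hσ (ofSetoid_lab _) fun x hx y hy => ?_⟩
    rw [ofSetoid_lab] at hx hy
    exact ofSetoid_rel _ ⟨x, hx⟩ ⟨y, hy⟩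

lemma card_atMostOneUnlabelled_superset [Finite α] (K : Set α) :
    Nat.card {σ : LPart α // σ.AtMostOneUnlabelled ∧ K ⊆ σ.lab} =
      ∑ j ∈ Finset.range (Nat.card α - K.ncard + 1),
        (Nat.card α - K.ncard).choose j * bell (Nat.card α - j) := by
  have := Fintype.ofFinite α
  have e : (Σ V : {V : Set α // K ⊆ V}, Setoid V.1) ≃
      {σ : LPart α // σ.AtMostOneUnlabelled ∧ K ⊆ σ.lab} :=
    (Equiv.subtypeSigmaEquiv _ fun V => K ⊆ V).symm.trans <|
      ((Equiv.ofBijective _ ofSetoid_bijective).subtypeEquiv fun q =>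
        iff_of_eq (congrArg (K ⊆ ·) (ofSetoid_lab q.2).symm)).trans <|
      Equiv.subtypeSubtypeEquivSubtypeInter _ fun σ : LPart α => K ⊆ σ.lab
  calc Nat.card {σ : LPart α // σ.AtMostOneUnlabelled ∧ K ⊆ σ.lab}
      = ∑ V : {V : Set α // K ⊆ V}, bell V.1.ncard := by
        simp_rw [← Nat.card_congr e, Nat.card_sigma, card_setoid_eq_bell, Nat.card_coe_set_eq]
    _ = ∑ V with K ⊆ V, bell V.ncard :=
        (Finset.sum_subtype (Finset.univ.filter (K ⊆ ·)) (fun V => by simp) fun V =>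
          bell V.ncard).symm
    _ = _ := by simpa only [smul_eq_mul] using sum_superset_apply_ncard K bell

/-- The labelled partition of `α` obtained from a partition of `Option α` by removing the point
`none` and labelling the blocks which did not contain it. -/
def ofSetoidOption (s : Setoid (Option α)) : LPart α where
  rel := Setoid.comap some s
  lab := {x | ¬ s (some x) none}
  lab_mem _ _ h := not_congr ⟨s.trans (s.symm h), s.trans h⟩

lemma mem_ofSetoidOption_lab {s : Setoid (Option α)} {x : α} :
    x ∈ (ofSetoidOption s).lab ↔ ¬ s (some x) none := Iff.rfl

lemma atMostOneUnlabelled_ofSetoidOption (s : Setoid (Option α)) :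
    (ofSetoidOption s).AtMostOneUnlabelled :=
  fun _ _ hx hy => s.trans (not_not.1 hx) (s.symm (not_not.1 hy))

lemma ofSetoidOption_injective : (ofSetoidOption : Setoid (Option α) → LPart α).Injective := by
  intro s t h
  have hnone (x : α) : s (some x) none ↔ t (some x) none := by
    rw [← not_iff_not, ← mem_ofSetoidOption_lab, h, mem_ofSetoidOption_lab]
  ext (_ | x) (_ | y)
  · exact iff_of_true (s.refl _) (t.refl _)
  · rw [s.comm', t.comm', hnone]
  · exact hnone x
  · exact Setoid.ext_iff.1 (congrArg LPart.rel h) x y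

lemma ofSetoidOption_ker_bind {β : Type*} (f : α → Option β) :
    ofSetoidOption (Setoid.ker fun o => o.bind f) = kernel f := rfl

lemma card_atMostOneUnlabelled [Finite α] :
    Nat.card {σ : LPart α // σ.AtMostOneUnlabelled} = bell (Nat.card α + 1) := by
  rw [← Finite.card_option, ← card_setoid_eq_bell]
  refine (Nat.card_congr (Equiv.ofBijective
    (fun s => ⟨ofSetoidOption s, atMostOneUnlabelled_ofSetoidOption s⟩) ⟨?_, fun σ => ?_⟩)).symm
  · exact fun s t h => ofSetoidOption_injective (congrArg Subtype.val h)
  · exact ⟨_, Subtype.ext <| (ofSetoidOption_ker_bind _).trans (kernel_blockMap σ.2)⟩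

lemma card_atMostOneUnlabelled_lab_nonempty_add_one [Finite α] :
    Nat.card {σ : LPart α // σ.AtMostOneUnlabelled ∧ σ.lab.Nonempty} + 1 =
      Nat.card {σ : LPart α // σ.AtMostOneUnlabelled} := by
  let τ : LPart α := ofSetoid (⊤ : Setoid (∅ : Set α))
  have hτ : τ.lab = ∅ := ofSetoid_lab _
  have eq_insert : {σ : LPart α | σ.AtMostOneUnlabelled} =
      insert τ {σ | σ.AtMostOneUnlabelled ∧ σ.lab.Nonempty} := by
    ext σ
    refine ⟨fun hσ => ?_, ?_⟩
    · refine σ.lab.eq_empty_or_nonempty.imp (fun h => ?_) fun h => ⟨hσ, h⟩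
      exact hσ.ext (atMostOneUnlabelled_ofSetoid _) (h.trans hτ.symm) (by simp [h])
    · rintro (rfl | hσ)
      exacts [atMostOneUnlabelled_ofSetoid _, hσ.1]
  have := congrArg Set.ncard eq_insert
  rw [Set.ncard_insert_of_notMem fun h => h.2.ne_empty hτ] at this
  exact this.symm

end LPart

lemma bell_succ (n : ℕ) :
    bell (n + 1) = ∑ j ∈ Finset.range (n + 1), n.choose j * bell (n - j) := by
  have h := LPart.card_atMostOneUnlabelled_superset (∅ : Set (Fin n))
  simpa only [Set.empty_subset, and_true, LPart.card_atMostOneUnlabelled, Nat.card_fin,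
    Set.ncard_empty, Nat.sub_zero] using h

section States

variable {α : Type*} [Finite α]

lemma card_lamda_ne_zero (K : Set α) :
    Nat.card {π : LStates α K // lamda K π.1 ≠ 0} =
      Nat.card {σ : LPart α // σ.AtMostOneUnlabelled ∧ K ⊆ σ.lab ∧ σ.lab.Nonempty} := by
  refine Nat.card_congr <| (Equiv.subtypeEquivRight lamda_ne_zero_iff).trans <|
    (Equiv.subtypeSubtypeEquivSubtypeInter _ LPart.AtMostOneUnlabelled).trans <|
      Equiv.subtypeEquivRight fun σ => ?_
  have piX_le : LPart.piX K ≤ σ ↔ K ⊆ σ.lab := ⟨And.right, fun h => ⟨bot_le, h⟩⟩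
  rw [piX_le, and_comm]

lemma card_lamda_ne_zero_of_nonempty {K : Set α} (hK : K.Nonempty) :
    Nat.card {π : LStates α K // lamda K π.1 ≠ 0} =
      ∑ j ∈ Finset.range (Nat.card α - K.ncard + 1),
        (Nat.card α - K.ncard).choose j * bell (Nat.card α - j) := by
  rw [card_lamda_ne_zero, ← LPart.card_atMostOneUnlabelled_superset]
  exact Nat.card_congr <| Equiv.subtypeEquivRight fun σ =>
    and_congr_right fun _ => and_iff_left_of_imp hK.mono

lemma card_lamda_ne_zero_empty_add_one :
    Nat.card {π : LStates α ∅ // lamda ∅ π.1 ≠ 0} + 1 = bell (Nat.card α + 1) := by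
  simp only [card_lamda_ne_zero, Set.empty_subset, true_and,
    LPart.card_atMostOneUnlabelled_lab_nonempty_add_one, LPart.card_atMostOneUnlabelled]

end States

/-- The cardinality `P₀(n,k)` of `Π_l(X,π_X)₀ = {π ∈ Π_l(X,π_X) : λ(π) ≠ 0}`, where `X` has
`n` elements and `π_X` has `k` labelled (and `n - k` unlabelled) singleton blocks, satisfies
`P₀(n,0) = ∑_{j=0}^{n-1} C(n,j) B(n-j) = B(n+1) - 1` and, for `k ≥ 1`,
`P₀(n,k) = ∑_{j=0}^{n-k} C(n-k,j) B(n-j)`. -/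
theorem card_states0 {α : Type*} [Fintype α] (K : Set α) (n k : ℕ)
    (hn : Fintype.card α = n) (hk : K.ncard = k) :
    (k = 0 →
        Nat.card {π : LStates α K // lamda K π.1 ≠ 0} =
            ∑ j ∈ Finset.range n, n.choose j * bell (n - j) ∧
          Nat.card {π : LStates α K // lamda K π.1 ≠ 0} = bell (n + 1) - 1) ∧
      (1 ≤ k →
        Nat.card {π : LStates α K // lamda K π.1 ≠ 0} =
          ∑ j ∈ Finset.range (n - k + 1), (n - k).choose j * bell (n - j)) := by
  rw [← Nat.card_eq_fintype_card] at hn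
  subst hn hk
  refine ⟨fun hk => ?_, fun hk => ?_⟩
  · obtain rfl : K = ∅ := (Set.ncard_eq_zero (Set.toFinite K)).1 hk
    have card_add_one := card_lamda_ne_zero_empty_add_one (α := α)
    have bell_eq := bell_succ (Nat.card α)
    rw [Finset.sum_range_succ, Nat.choose_self, Nat.sub_self, bell_zero] at bell_eq
    exact ⟨by lia, by lia⟩
  · exact card_lamda_ne_zero_of_nonempty ((Set.ncard_pos (Set.toFinite K)).1 hk)

end
end
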